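/- The polynomial Δ ∈ R is irreducible. Consequently the set of α ∈ K^I for which the curve C_α is singular is an irreducible hypersurface in K^I, defined by the single irreducible equation Δ = 0. -/

import Mathlib

open MvPolynomial

set_option synthInstance.maxHeartbeats 1000000
set_option maxHeartbeats 1000000

def idxSet (p q : ℕ) : Finset (ℕ × ℕ) :=
  (Finset.range q ×ˢ Finset.range p).filter fun t => t.1 * p + t.2 * q < p * q

/-- `R = K[{A_νμ}]`, the polynomial ring in the indeterminates `A_νμ`, `(ν,μ) ∈ I`. -/
abbrev coefRing (K : Type) [Field K] (p q : ℕ) := MvPolynomial ↥(idxSet p q) K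

/-- `R[X,Y]`, with `X 0 = X` and `X 1 = Y`. -/
abbrev genRing (K : Type) [Field K] (p q : ℕ) := MvPolynomial (Fin 2) (coefRing K p q)

/-- The generic normed Weierstraß polynomial
`F = Y^p − X^q + Σ_{(ν,μ) ∈ I} A_νμ X^ν Y^μ ∈ R[X,Y]` of type `p,q`. -/
noncomputable def genF (K : Type) [Field K] (p q : ℕ) : genRing K p q :=
  X 1 ^ p - X 0 ^ q +
    ∑ i : idxSet p q, C (MvPolynomial.X i) * X 0 ^ (i : ℕ × ℕ).1 * X 1 ^ (i : ℕ × ℕ).2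

/-- The determinant `Δ ∈ R` of the `R`-linear endomorphism of `N = R[X,Y]/(F_X, F_Y)`
given by multiplication by the residue class of `F`. -/
noncomputable def genDelta (K : Type) [Field K] (p q : ℕ) : coefRing K p q :=
  LinearMap.det
    (LinearMap.mul (coefRing K p q)
      (genRing K p q ⧸ Ideal.span {pderiv 0 (genF K p q), pderiv 1 (genF K p q)})
      (Ideal.Quotient.mk (Ideal.span {pderiv 0 (genF K p q), pderiv 1 (genF K p q)})
        (genF K p q)))

/-- The normed Weierstraß polynomial `F_a = Y^p − X^q + Σ a_νμ X^ν Y^μ ∈ K[X,Y]`. -/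
noncomputable def wPoly (K : Type) [CommRing K] (p q : ℕ) (a : idxSet p q → K) :
    MvPolynomial (Fin 2) K :=
  X 1 ^ p - X 0 ^ q + ∑ i : idxSet p q, C (a i) * X 0 ^ (i : ℕ × ℕ).1 * X 1 ^ (i : ℕ × ℕ).2

/-- `P` is a singular point of the curve `G = 0`. -/
def IsSingAt (K : Type) [CommRing K] (G : MvPolynomial (Fin 2) K) (P : K × K) : Prop :=
  eval ![P.1, P.2] G = 0 ∧ eval ![P.1, P.2] (pderiv 0 G) = 0 ∧ eval ![P.1, P.2] (pderiv 1 G) = 0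

/-- The exponent vectors in two variables, to be ordered by weight. -/
def WeightSyn (_u _v : ℕ) : Type := Fin 2 →₀ ℕ

namespace WeightSyn

variable (u v : ℕ)

noncomputable instance : AddCommMonoid (WeightSyn u v) :=
  inferInstanceAs (AddCommMonoid (Fin 2 →₀ ℕ))

/-- The sorting key: the weight `u d₀ + v d₁`, with ties broken lexicographically. -/
def key (d : WeightSyn u v) : ℕ ×ₗ (ℕ ×ₗ ℕ) :=
  toLex (u * (show Fin 2 →₀ ℕ from d) 0 + v * (show Fin 2 →₀ ℕ from d) 1,
    toLex ((show Fin 2 →₀ ℕ from d) 0, (show Fin 2 →₀ ℕ from d) 1))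

theorem key_injective : Function.Injective (key u v) := by
  intro d e h
  simp only [key, EmbeddingLike.apply_eq_iff_eq, Prod.mk.injEq] at h
  refine Finsupp.ext fun i => ?_
  fin_cases i
  · exact h.2.1
  · exact h.2.2

theorem key_add (d e : WeightSyn u v) : key u v (d + e) = key u v d + key u v e := by
  have h : ∀ i, (show Fin 2 →₀ ℕ from d + e) i
      = (show Fin 2 →₀ ℕ from d) i + (show Fin 2 →₀ ℕ from e) i := fun _ => rfl
  simp only [key, h, ← toLex_add, Prod.mk_add_mk]
  congr 2
  ring

noncomputable instance : LinearOrder (WeightSyn u v) :=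
  LinearOrder.lift' (key u v) (key_injective u v)

theorem le_iff (d e : WeightSyn u v) : d ≤ e ↔ key u v d ≤ key u v e := Iff.rfl

instance : IsOrderedAddMonoid (WeightSyn u v) where
  add_le_add_left a b h c := by
    rw [le_iff, key_add, key_add]
    exact add_le_add_left (α := ℕ ×ₗ (ℕ ×ₗ ℕ)) h _

instance : WellFoundedLT (WeightSyn u v) :=
  ⟨InvImage.wf (key u v) wellFounded_lt⟩

end WeightSyn

/-- The monomial order in two variables of weights `u` and `v`, ties broken lexicographically. -/
noncomputable def weightOrder (u v : ℕ) : MonomialOrder (Fin 2) where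
  syn := WeightSyn u v
  toSyn := AddEquiv.refl _
  toSyn_monotone := by
    intro d e h
    refine Prod.Lex.toLex_mono (Prod.mk_le_mk.2 ⟨?_, Prod.Lex.toLex_mono (Prod.mk_le_mk.2 ⟨h 0, h 1⟩)⟩)
    exact add_le_add (Nat.mul_le_mul_left _ (h 0)) (Nat.mul_le_mul_left _ (h 1))

open scoped MonomialOrder

theorem weightOrder_lt_of_weight_lt {u v : ℕ} {d e : Fin 2 →₀ ℕ}
    (h : u * d 0 + v * d 1 < u * e 0 + v * e 1) : d ≺[weightOrder u v] e :=
  Prod.Lex.toLex_lt_toLex.2 (Or.inl h)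

section CoprimeLeadingTerms

variable {R : Type*} [CommRing R] (m : MonomialOrder (Fin 2)) {a b : ℕ}
  {f g : MvPolynomial (Fin 2) R}

/-- A polynomial in `(f, g)` all of whose exponents lie below those of the pure-power leading
terms of `f` and `g` vanishes. -/
theorem eq_zero_of_mem_span_pair_of_reduced
    (hf : m.degree f = Finsupp.single 0 a) (hfu : IsUnit (m.leadingCoeff f))
    (hg : m.degree g = Finsupp.single 1 b) (hgu : IsUnit (m.leadingCoeff g))
    {r : MvPolynomial (Fin 2) R} (hr : r ∈ Ideal.span {f, g})
    (hred : ∀ d ∈ r.support, d 0 < a ∧ d 1 < b) : r = 0 := by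
  by_contra hr0
  obtain ⟨s, t, hst⟩ := Ideal.mem_span_pair.1 hr
  obtain ⟨k, s', hs, -, hs'⟩ := m.div_single hgu s
  set t' := t + k * f with ht'
  have hst' : s' * f + t' * g = r := by
    rw [← hst, hs, ht']
    ring
  have hdeg := hred _ (m.degree_mem_support hr0)
  have hdf : ∀ {h : MvPolynomial (Fin 2) R}, h ≠ 0 →
      m.degree (h * f) = m.degree h + Finsupp.single 0 a := fun {h} hh => by
    rw [← hf]
    exact m.degree_mul_of_isRegular_right hh hfu.isRegular
  have hdg : ∀ {h : MvPolynomial (Fin 2) R}, h ≠ 0 →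
      m.degree (h * g) = m.degree h + Finsupp.single 1 b := fun {h} hh => by
    rw [← hg]
    exact m.degree_mul_of_isRegular_right hh hgu.isRegular
  by_cases hs0 : s' = 0
  · by_cases ht0 : t' = 0
    · exact hr0 (by rw [← hst', hs0, ht0]; ring)
    · rw [← hst', hs0, zero_mul, zero_add, hdg ht0] at hdeg
      simp at hdeg
  · by_cases ht0 : t' = 0
    · rw [← hst', ht0, zero_mul, add_zero, hdf hs0] at hdeg
      simp at hdeg
    · have hne : m.degree (s' * f) ≠ m.degree (t' * g) := by
        intro h
        rw [hdf hs0, hdg ht0] at h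
        have h1 := DFunLike.congr_fun h 1
        simp at h1
        refine hs' _ (m.degree_mem_support hs0) ?_
        rw [hg, Finsupp.single_le_iff]
        omega
      have hsup := m.degree_add_of_ne hne
      rw [hst'] at hsup
      rcases max_choice (m.toSyn (m.degree (s' * f))) (m.toSyn (m.degree (t' * g))) with h | h
      · rw [h, hdf hs0, m.toSyn.injective.eq_iff] at hsup
        rw [hsup] at hdeg
        simp at hdeg
      · rw [h, hdg ht0, m.toSyn.injective.eq_iff] at hsup
        rw [hsup] at hdeg
        simp at hdeg

/-- If `f` and `g` have pure-power leading terms with unit coefficients, then the monomials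
below these form a basis of the quotient by `(f, g)`. -/
theorem exists_basis_quotient_span_pair
    (hf : m.degree f = Finsupp.single 0 a) (hfu : IsUnit (m.leadingCoeff f))
    (hg : m.degree g = Finsupp.single 1 b) (hgu : IsUnit (m.leadingCoeff g)) :
    ∃ B : Module.Basis (Fin a × Fin b) R (MvPolynomial (Fin 2) R ⧸ Ideal.span {f, g}),
      ∀ k, B k = Ideal.Quotient.mk _
        (monomial (Finsupp.single 0 (k.1 : ℕ) + Finsupp.single 1 (k.2 : ℕ)) 1) := by
  classical
  set e : Fin a × Fin b → Fin 2 →₀ ℕ :=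
    fun k => Finsupp.single 0 (k.1 : ℕ) + Finsupp.single 1 (k.2 : ℕ) with he
  have he0 : ∀ k, e k 0 = k.1 := fun k => by simp [he]
  have he1 : ∀ k, e k 1 = k.2 := fun k => by simp [he]
  have heinj : Function.Injective e := fun k l h =>
    Prod.ext (Fin.ext (by rw [← he0, h, he0])) (Fin.ext (by rw [← he1, h, he1]))
  have hli : LinearIndependent R
      fun k => Ideal.Quotient.mk (Ideal.span {f, g}) (monomial (e k) (1 : R)) := by
    rw [Fintype.linearIndependent_iff]
    intro c hc
    set r : MvPolynomial (Fin 2) R := ∑ k, monomial (e k) (c k) with hr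
    have hmem : r ∈ Ideal.span {f, g} := by
      rw [← Ideal.Quotient.eq_zero_iff_mem, hr, map_sum, ← hc]
      refine Finset.sum_congr rfl fun k _ => ?_
      rw [← Ideal.Quotient.mkₐ_eq_mk R, ← map_smul, smul_monomial, smul_eq_mul, mul_one]
    have hr0 : r = 0 := by
      refine eq_zero_of_mem_span_pair_of_reduced m hf hfu hg hgu hmem fun d hd => ?_
      obtain ⟨k, -, hk⟩ := Finset.mem_biUnion.1 (support_sum hd)
      rw [Finset.mem_singleton.1 (support_monomial_subset hk), he0, he1]
      exact ⟨k.1.2, k.2.2⟩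
    intro k
    have h := congrArg (coeff (e k)) hr0
    simpa [hr, coeff_sum, coeff_monomial, heinj.eq_iff] using h
  refine ⟨Module.Basis.mk hli ?_, fun k => by rw [Module.Basis.mk_apply]⟩
  rintro x -
  obtain ⟨x, rfl⟩ := Ideal.Quotient.mk_surjective x
  have hB : ∀ h ∈ ({f, g} : Set (MvPolynomial (Fin 2) R)), IsUnit (m.leadingCoeff h) := by
    rintro h (rfl | rfl)
    exacts [hfu, hgu]
  obtain ⟨c, r, hx, -, hr⟩ := m.div_set hB x
  have hxr : Ideal.Quotient.mk (Ideal.span {f, g}) x = Ideal.Quotient.mk _ r := by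
    rw [Ideal.Quotient.eq, hx, add_sub_cancel_right, Finsupp.linearCombination_apply]
    exact Ideal.sum_mem _ fun h _ => Ideal.mul_mem_left _ _ (Ideal.subset_span h.2)
  rw [hxr, r.as_sum, map_sum]
  refine Submodule.sum_mem _ fun d hd => ?_
  have h0 := hr d hd f (by simp)
  have h1 := hr d hd g (by simp)
  rw [hf, Finsupp.single_le_iff, not_le] at h0
  rw [hg, Finsupp.single_le_iff, not_le] at h1
  have hde : d = e (⟨d 0, h0⟩, ⟨d 1, h1⟩) := by
    ext i
    fin_cases i
    · exact (he0 (⟨d 0, h0⟩, ⟨d 1, h1⟩)).symm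
    · exact (he1 (⟨d 0, h0⟩, ⟨d 1, h1⟩)).symm
  rw [← mul_one (coeff d r), ← smul_eq_mul, ← smul_monomial, ← Ideal.Quotient.mkₐ_eq_mk R,
    map_smul]
  refine Submodule.smul_mem _ _ (Submodule.subset_span ⟨(⟨d 0, h0⟩, ⟨d 1, h1⟩), ?_⟩)
  simp only [← hde, Ideal.Quotient.mkₐ_eq_mk]

end CoprimeLeadingTerms

section LeadingTerm

variable {R : Type*} [CommRing R] {u v : ℕ} {d : Fin 2 →₀ ℕ} {c : R}
  {g : MvPolynomial (Fin 2) R}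

theorem weightOrder_degree_monomial_add (hc : c ≠ 0)
    (hg : ∀ e ∈ g.support, u * e 0 + v * e 1 < u * d 0 + v * d 1) :
    (weightOrder u v).degree (monomial d c + g) = d ∧
      (weightOrder u v).leadingCoeff (monomial d c + g) = c := by
  classical
  have hd : coeff d g = 0 := by
    by_contra h
    exact lt_irrefl _ (hg d (mem_support_iff.2 h))
  have hcoeff : coeff d (monomial d c + g) = c := by simp [hd]
  have hdeg : (weightOrder u v).degree (monomial d c + g) = d := by
    refine (weightOrder u v).toSyn.injective (le_antisymm ?_ ?_)
    · refine MonomialOrder.degree_le_iff.2 fun e he => ?_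
      rcases Finset.mem_union.1 (support_add he) with h | h
      · rw [Finset.mem_singleton.1 (support_monomial_subset h)]
      · exact (weightOrder_lt_of_weight_lt (hg e h)).le
    · exact MonomialOrder.le_degree (mem_support_iff.2 (by rwa [hcoeff]))
  exact ⟨hdeg, by rw [MonomialOrder.leadingCoeff, hdeg, hcoeff]⟩

end LeadingTerm

section FiniteFree

variable {R N ι : Type*} [CommRing R] [CommRing N] [Algebra R N] [Fintype ι]

theorem dvd_algebraMap_norm_of_basis (b : Module.Basis ι R N) (x : N) :
    x ∣ algebraMap R N (Algebra.norm R x) := by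
  classical
  set M := Algebra.leftMulMatrix b x with hM
  have hx : Polynomial.aeval x M.charpoly = 0 := by
    apply Algebra.leftMulMatrix_injective b
    rw [map_zero, ← Polynomial.aeval_algHom_apply, ← hM, Matrix.aeval_self_charpoly]
  have h : x ∣ algebraMap R N (M.charpoly.coeff 0) := by
    obtain ⟨s, hs⟩ := Polynomial.X_dvd_sub_C (p := M.charpoly)
    have := congrArg (Polynomial.aeval x) hs
    rw [map_sub, hx, Polynomial.aeval_C, map_mul, Polynomial.aeval_X, zero_sub] at this
    exact (dvd_neg).1 ⟨_, this⟩
  rw [Algebra.norm_eq_matrix_det b, ← hM, Matrix.det_eq_sign_charpoly_coeff, map_mul]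
  exact h.mul_left _

theorem norm_dvd_pow_of_dvd_algebraMap (b : Module.Basis ι R N) {x : N} {r : R}
    (h : x ∣ algebraMap R N r) :
    Algebra.norm R x ∣ r ^ Fintype.card ι := by
  obtain ⟨y, hy⟩ := h
  exact ⟨Algebra.norm R y, by rw [← map_mul, ← hy, Algebra.norm_algebraMap_of_basis b]⟩

theorem repr_semilinear_of_fixes_basis (b : Module.Basis ι R N) (θ : R →+* R)
    (Θ : N →+* N)
    (hΘ : ∀ r, Θ (algebraMap R N r) = algebraMap R N (θ r)) (hb : ∀ i, Θ (b i) = b i)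
    (x : N) (i : ι) : b.repr (Θ x) i = θ (b.repr x i) := by
  have h : Θ x = ∑ j, θ (b.repr x j) • b j := by
    conv_lhs => rw [← b.sum_repr x]
    simp only [map_sum, Algebra.smul_def, map_mul, hΘ, hb]
  rw [h, b.repr_sum_self]

end FiniteFree

theorem norm_mk_dvd_pow_of_sub_mem {σ ι R : Type*} [Fintype ι] [CommRing R]
    {J : Ideal (MvPolynomial σ R)} (b : Module.Basis ι R (MvPolynomial σ R ⧸ J))
    {f : R} {g s : MvPolynomial σ R} (h : C f - s * g ∈ J) :
    Algebra.norm R (Ideal.Quotient.mk J g) ∣ f ^ Fintype.card ι := by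
  refine norm_dvd_pow_of_dvd_algebraMap b ⟨Ideal.Quotient.mk J s, ?_⟩
  rw [← Ideal.Quotient.eq, mul_comm, map_mul] at h
  exact h

section Generic

variable (K : Type) [Field K] (p q : ℕ)

/-- The ideal `(F_X, F_Y)`. -/
noncomputable abbrev jacIdeal : Ideal (genRing K p q) :=
  Ideal.span {pderiv 0 (genF K p q), pderiv 1 (genF K p q)}

theorem genDelta_eq_norm :
    genDelta K p q =
      Algebra.norm (coefRing K p q) (Ideal.Quotient.mk (jacIdeal K p q) (genF K p q)) :=
  rfl

theorem exists_basis_jacIdeal [CharZero K] (hp : 1 < p) (hpq : p < q) :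
    ∃ B : Module.Basis (Fin (q - 1) × Fin (p - 1)) (coefRing K p q)
        (genRing K p q ⧸ jacIdeal K p q),
      ∀ k, B k = Ideal.Quotient.mk _
        (monomial (Finsupp.single 0 (k.1 : ℕ) + Finsupp.single 1 (k.2 : ℕ)) 1) := by
  classical
  set G : genRing K p q :=
    ∑ i : idxSet p q, C (MvPolynomial.X i) * X 0 ^ (i : ℕ × ℕ).1 * X 1 ^ (i : ℕ × ℕ).2 with hG
  have hF : genF K p q = X 1 ^ p - X 0 ^ q + G := rfl
  have hGw : ∀ e ∈ G.support, p * e 0 + q * e 1 < p * q := by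
    intro e he
    obtain ⟨i, -, hi⟩ := Finset.mem_biUnion.1 (support_sum he)
    have hmon : (C (MvPolynomial.X i) * X 0 ^ (i : ℕ × ℕ).1 * X 1 ^ (i : ℕ × ℕ).2 : genRing K p q)
        = monomial (Finsupp.single 0 (i : ℕ × ℕ).1 + Finsupp.single 1 (i : ℕ × ℕ).2)
          (MvPolynomial.X i) := by
      rw [X_pow_eq_monomial, X_pow_eq_monomial, C_mul_monomial, monomial_mul, mul_one, mul_one]
    rw [hmon] at hi
    rw [Finset.mem_singleton.1 (support_monomial_subset hi)]
    have := (Finset.mem_filter.1 i.2).2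
    simp only [Finsupp.add_apply, Finsupp.single_apply]
    simp
    linarith [mul_comm p (i : ℕ × ℕ).1, mul_comm q (i : ℕ × ℕ).2]
  have hGd : ∀ (j : Fin 2) (e : Fin 2 →₀ ℕ), e ∈ (pderiv j G).support →
      p * (e + Finsupp.single j 1 : Fin 2 →₀ ℕ) 0
        + q * (e + Finsupp.single j 1 : Fin 2 →₀ ℕ) 1 < p * q := by
    intro j e he
    refine hGw _ (mem_support_iff.2 fun h => ?_)
    rw [mem_support_iff, coeff_pderiv, h, zero_mul] at he
    exact he rfl
  have hF0 : pderiv 0 (genF K p q)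
      = monomial (Finsupp.single 0 (q - 1)) (-(q : coefRing K p q)) + pderiv 0 G := by
    rw [hF, map_add, map_sub, X_pow_eq_monomial, X_pow_eq_monomial, pderiv_monomial_single,
      pderiv_monomial]
    simp
  have hF1 : pderiv 1 (genF K p q)
      = monomial (Finsupp.single 1 (p - 1)) (p : coefRing K p q) + pderiv 1 G := by
    rw [hF, map_add, map_sub, X_pow_eq_monomial, X_pow_eq_monomial, pderiv_monomial_single,
      pderiv_monomial]
    simp
  have hunit : ∀ n : ℕ, 0 < n → IsUnit (n : coefRing K p q) := fun n hn => by
    have : IsUnit (n : K) := (Nat.cast_ne_zero.2 hn.ne').isUnit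
    simpa using this.map (C : K →+* coefRing K p q)
  have hpu := hunit p (by omega)
  have hqu := (hunit q (by omega)).neg
  obtain ⟨h0d, h0c⟩ := weightOrder_degree_monomial_add (u := p) (v := q)
    (d := Finsupp.single 0 (q - 1)) hqu.ne_zero (g := pderiv 0 G) (fun e he => by
      have := hGd 0 e he
      simp at this ⊢
      have hq : q = (q - 1) + 1 := by omega
      have : p * q = p * (q - 1) + p := by conv_lhs => rw [hq, mul_add, mul_one]
      linarith)
  obtain ⟨h1d, h1c⟩ := weightOrder_degree_monomial_add (u := p) (v := q)
    (d := Finsupp.single 1 (p - 1)) hpu.ne_zero (g := pderiv 1 G) (fun e he => by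
      have := hGd 1 e he
      simp at this ⊢
      have hp : p = (p - 1) + 1 := by omega
      have : p * q = q * (p - 1) + q := by conv_lhs => rw [mul_comm, hp, mul_add, mul_one]
      linarith)
  rw [← hF0] at h0d h0c
  rw [← hF1] at h1d h1c
  exact exists_basis_quotient_span_pair (weightOrder p q) h0d (h0c ▸ hqu) h1d (h1c ▸ hpu)

end Generic

section Discriminant

variable {K : Type} [Field K] {p q : ℕ}

theorem map_eval_genF (a : idxSet p q → K) :
    map (eval a) (genF K p q) = wPoly K p q a := by
  simp [genF, wPoly]

theorem map_eval_pderiv_genF (a : idxSet p q → K) (j : Fin 2) :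
    map (eval a) (pderiv j (genF K p q)) = pderiv j (wPoly K p q a) := by
  rw [← pderiv_map, map_eval_genF]

/-- The discriminant vanishes on every singular curve. -/
theorem eval_genDelta_eq_zero_of_isSingAt [CharZero K] (hp : 1 < p) (hpq : p < q)
    {a : idxSet p q → K} {P : K × K} (h : IsSingAt K (wPoly K p q a) P) :
    eval a (genDelta K p q) = 0 := by
  obtain ⟨B, -⟩ := exists_basis_jacIdeal K p q hp hpq
  let ψ₀ : genRing K p q →+* K := (eval ![P.1, P.2]).comp (map (eval a))
  have hψ : ∀ x ∈ jacIdeal K p q, ψ₀ x = 0 := by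
    intro x hx
    refine (Ideal.span_le (I := RingHom.ker ψ₀)).2 ?_ hx
    rintro _ (rfl | rfl)
    · simpa [ψ₀, RingHom.mem_ker, map_eval_pderiv_genF] using h.2.1
    · simpa [ψ₀, RingHom.mem_ker, map_eval_pderiv_genF] using h.2.2
  have hdvd := map_dvd (Ideal.Quotient.lift (jacIdeal K p q) ψ₀ hψ)
    (dvd_algebraMap_norm_of_basis B (Ideal.Quotient.mk _ (genF K p q)))
  rw [← genDelta_eq_norm, Ideal.Quotient.lift_mk] at hdvd
  have hF : ψ₀ (genF K p q) = 0 := by simpa [ψ₀, map_eval_genF] using h.1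
  rw [hF, zero_dvd_iff] at hdvd
  change ψ₀ (C (genDelta K p q)) = 0 at hdvd
  simpa [ψ₀] using hdvd

/-- A curve at which the discriminant vanishes is singular. -/
theorem exists_isSingAt_of_eval_genDelta_eq_zero [IsAlgClosed K] [CharZero K]
    (hp : 1 < p) (hpq : p < q) {a : idxSet p q → K} (h : eval a (genDelta K p q) = 0) :
    ∃ P : K × K, IsSingAt K (wPoly K p q a) P := by
  classical
  obtain ⟨B, -⟩ := exists_basis_jacIdeal K p q hp hpq
  by_contra hsing
  set W := wPoly K p q a with hW
  let ρ : genRing K p q →+* Matrix (Fin (q - 1) × Fin (p - 1)) (Fin (q - 1) × Fin (p - 1)) K :=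
    ((eval a).mapMatrix.comp (Algebra.leftMulMatrix B).toRingHom).comp
      (Ideal.Quotient.mk (jacIdeal K p q))
  have hρC : ∀ r, ρ (C r) = (eval a).mapMatrix (algebraMap _ _ r) := by
    intro r
    exact congrArg (eval a).mapMatrix ((Algebra.leftMulMatrix B).commutes r)
  have hρ : ρ.comp ((map (C : K →+* coefRing K p q)).comp (map (eval a))) = ρ := by
    refine MvPolynomial.ringHom_ext (fun r => ?_) fun i => ?_
    · simp only [RingHom.comp_apply, map_C, hρC]
      ext i j
      by_cases hij : i = j <;> simp [Matrix.algebraMap_matrix_apply, hij]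
    · simp
  have hker : ∀ x ∈ jacIdeal K p q, ρ x = 0 := fun x hx => by
    simp [ρ, Ideal.Quotient.eq_zero_iff_mem.2 hx]
  have hdet : (ρ (genF K p q)).det = 0 := by
    rw [← h, genDelta_eq_norm, Algebra.norm_eq_matrix_det B, RingHom.map_det]
    rfl
  have hone : (1 : MvPolynomial (Fin 2) K) ∈ Ideal.span {W, pderiv 0 W, pderiv 1 W} := by
    rw [← Ideal.eq_top_iff_one, ← Ideal.radical_eq_top,
      ← vanishingIdeal_zeroLocus_eq_radical (K := K), Ideal.eq_top_iff_one]
    intro x hx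
    refine absurd ⟨(x 0, x 1), ?_⟩ hsing
    have hx' : (![x 0, x 1] : Fin 2 → K) = x := by
      ext i
      fin_cases i <;> rfl
    have hz : ∀ f ∈ ({W, pderiv 0 W, pderiv 1 W} : Set (MvPolynomial (Fin 2) K)),
        eval ![x 0, x 1] f = 0 := fun f hf => by
      rw [hx']
      simpa [aeval_eq_eval] using hx f (Ideal.subset_span hf)
    exact ⟨hz _ (by simp), hz _ (by simp), hz _ (by simp)⟩
  obtain ⟨s, y, hy, hs⟩ := Ideal.mem_span_insert.1 hone
  obtain ⟨t, u, htu⟩ := Ideal.mem_span_pair.1 hy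
  have hval : ∀ x, ρ (map C (map (eval a) x)) = ρ x := fun x => DFunLike.congr_fun hρ x
  have h1 := congrArg (fun x => ρ (map C x)) hs
  simp only [map_one, map_add, map_mul, ← htu] at h1
  rw [hW, ← map_eval_pderiv_genF, ← map_eval_pderiv_genF, ← map_eval_genF, hval, hval, hval,
    hker (pderiv 0 _) (Ideal.subset_span (by simp)),
    hker (pderiv 1 _) (Ideal.subset_span (by simp)), mul_zero, mul_zero, add_zero, add_zero] at h1
  have := congrArg Matrix.det h1
  rw [Matrix.det_one, Matrix.det_mul, hdet, mul_zero] at this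
  exact one_ne_zero this

/-- The specialization of the coefficients to `a`, with the one at `o` kept as indeterminate. -/
noncomputable def specialize (o : idxSet p q) (a : idxSet p q → K) :
    coefRing K p q →+* Polynomial K :=
  eval₂Hom Polynomial.C (Function.update (fun i => Polynomial.C (a i)) o Polynomial.X)

theorem eval_specialize (o : idxSet p q) (a : idxSet p q → K) (t : K) (f : coefRing K p q) :
    (specialize o a f).eval t = eval (Function.update a o t) f := by
  have : (Polynomial.evalRingHom t).comp (specialize o a) = eval (Function.update a o t) := by
    refine MvPolynomial.ringHom_ext (fun r => by simp [specialize]) fun i => ?_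
    by_cases hi : i = o
    · subst hi
      simp [specialize]
    · simp [specialize, hi]
  exact DFunLike.congr_fun this f

/-- As a polynomial in the constant coefficient, the discriminant is monic of degree
`(p - 1) (q - 1)`. -/
theorem specialize_genDelta [CharZero K] (hp : 1 < p) (hpq : p < q)
    {o : idxSet p q} (ho : (o : ℕ × ℕ) = (0, 0)) (a : idxSet p q → K) :
    (specialize o a (genDelta K p q)).Monic ∧
      (specialize o a (genDelta K p q)).natDegree ≤ (q - 1) * (p - 1) := by
  classical
  obtain ⟨B, hB⟩ := exists_basis_jacIdeal K p q hp hpq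
  let θ : coefRing K p q →+* coefRing K p q := eval₂Hom C (Function.update X o 0)
  have hθF : map θ (genF K p q) = genF K p q - C (X o) := by
    have hsum : ∀ c : idxSet p q → coefRing K p q,
        (∑ i : idxSet p q, C (c i) * X 0 ^ (i : ℕ × ℕ).1 * X 1 ^ (i : ℕ × ℕ).2 : genRing K p q)
        = C (c o) + ∑ i ∈ Finset.univ.erase o,
          C (c i) * X 0 ^ (i : ℕ × ℕ).1 * X 1 ^ (i : ℕ × ℕ).2 := fun c => by
      rw [← Finset.add_sum_erase _ _ (Finset.mem_univ o)]
      simp [ho]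
    have h1 : map θ (genF K p q) = X 1 ^ p - X 0 ^ q + ∑ i : idxSet p q,
        C (θ (X i)) * X 0 ^ (i : ℕ × ℕ).1 * X 1 ^ (i : ℕ × ℕ).2 := by simp [genF]
    rw [h1, genF, hsum, hsum]
    have h2 : ∀ i ∈ Finset.univ.erase o, θ (X i) = X i := fun i hi => by
      simp [θ, Finset.ne_of_mem_erase hi]
    rw [Finset.sum_congr rfl fun i hi => by rw [h2 i hi]]
    simp [θ]
    ring
  have hθd : ∀ j, map θ (pderiv j (genF K p q)) = pderiv j (genF K p q) := fun j => by
    rw [← pderiv_map, hθF, map_sub, pderiv_C, sub_zero]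
  have hle : jacIdeal K p q ≤ (jacIdeal K p q).comap (map θ) := by
    refine Ideal.span_le.2 ?_
    rintro _ (rfl | rfl)
    · exact Ideal.mem_comap.2 ((hθd 0).symm ▸ Ideal.subset_span (by simp))
    · exact Ideal.mem_comap.2 ((hθd 1).symm ▸ Ideal.subset_span (by simp))
  let Θ : genRing K p q ⧸ jacIdeal K p q →+* genRing K p q ⧸ jacIdeal K p q :=
    Ideal.quotientMap _ (map θ) hle
  have hΘ : ∀ x, Θ (Ideal.Quotient.mk _ x) = Ideal.Quotient.mk _ (map θ x) := fun x =>
    Ideal.quotientMap_mk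
  set G := Ideal.Quotient.mk (jacIdeal K p q) (genF K p q - C (X o)) with hG
  have hΘG : Θ G = G := by
    rw [hG, hΘ, map_sub, hθF, map_C]
    simp [θ]
  have hΘB : ∀ k, Θ (B k) = B k := fun k => by
    rw [hB, hΘ, map_monomial, map_one]
  have hΘC : ∀ r, Θ (algebraMap _ _ r) = algebraMap _ _ (θ r) := fun r => by
    change Θ (Ideal.Quotient.mk _ (C r)) = Ideal.Quotient.mk _ (C (θ r))
    rw [hΘ, map_C]
  have hcomp : (specialize o a).comp θ = Polynomial.C.comp (eval (Function.update a o 0)) := by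
    refine MvPolynomial.ringHom_ext (fun r => by simp [specialize, θ]) fun i => ?_
    by_cases hi : i = o
    · subst hi
      simp [specialize, θ]
    · simp [specialize, θ, hi]
  clear_value Θ G θ
  set M := Algebra.leftMulMatrix B G with hM
  have hθM : ∀ i j, θ (M i j) = M i j := fun i j => by
    rw [hM, Algebra.leftMulMatrix_eq_repr_mul]
    have := repr_semilinear_of_fixes_basis B θ Θ hΘC hΘB (G * B j) i
    rw [map_mul, hΘG, hΘB] at this
    exact this.symm
  have hF : Algebra.leftMulMatrix B (Ideal.Quotient.mk (jacIdeal K p q) (genF K p q))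
      = (X o : coefRing K p q) • 1 + M := by
    have h1 : Ideal.Quotient.mk (jacIdeal K p q) (genF K p q)
        = algebraMap (coefRing K p q) _ (X o) + G := by
      rw [hG, map_sub]
      exact (add_sub_cancel _ _).symm
    rw [h1, map_add, AlgHom.commutes, Algebra.algebraMap_eq_smul_one]
  have hdet : specialize o a (genDelta K p q) = ((Polynomial.X : Polynomial K) •
      (1 : Matrix (Fin (q - 1) × Fin (p - 1)) (Fin (q - 1) × Fin (p - 1)) (Polynomial K))
      + (M.map (eval (Function.update a o 0))).map Polynomial.C).det := by
    rw [genDelta_eq_norm, Algebra.norm_eq_matrix_det B, hF, RingHom.map_det]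
    congr 1
    ext1 i j
    have hij : specialize o a (M i j) = Polynomial.C (eval (Function.update a o 0) (M i j)) := by
      rw [← hθM i j]
      exact (DFunLike.congr_fun hcomp _).trans (by
        rw [RingHom.comp_apply, hθM])
    have ho' : specialize o a (X o) = Polynomial.X := by simp [specialize]
    simp [hij, ho', Matrix.one_apply, apply_ite]
  rw [hdet]
  refine ⟨Polynomial.leadingCoeff_det_X_one_add_C _, ?_⟩
  have := Polynomial.natDegree_det_X_add_C_le 1 (M.map (eval (Function.update a o 0)))
  simpa using this

end Discriminant

section Incidence

variable {K : Type} [Field K] {p q : ℕ}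

theorem zero_zero_mem_idxSet (hp : 1 < p) (hpq : p < q) : (0, 0) ∈ idxSet p q := by
  simp only [idxSet, Finset.mem_filter, Finset.mem_product, Finset.mem_range]
  refine ⟨⟨by omega, by omega⟩, by nlinarith⟩

theorem one_zero_mem_idxSet (hp : 1 < p) (hpq : p < q) : (1, 0) ∈ idxSet p q := by
  simp only [idxSet, Finset.mem_filter, Finset.mem_product, Finset.mem_range]
  refine ⟨⟨by omega, by omega⟩, by nlinarith⟩

theorem zero_one_mem_idxSet (hp : 1 < p) (hpq : p < q) : (0, 1) ∈ idxSet p q := by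
  simp only [idxSet, Finset.mem_filter, Finset.mem_product, Finset.mem_range]
  refine ⟨⟨by omega, by omega⟩, by nlinarith⟩

/-- The conditions `F = F_X = F_Y = 0` can be solved for the coefficients of `1`, `X` and `Y`:
there is a retraction of `R[X,Y]` that kills `F`, `F_X`, `F_Y` and is the identity modulo them. -/
theorem exists_incidence_retraction (hp : 1 < p) (hpq : p < q) :
    ∃ χ : genRing K p q →+* genRing K p q,
      χ (genF K p q) = 0 ∧ (∀ j, χ (pderiv j (genF K p q)) = 0) ∧
      ∀ f, f - χ f ∈
        Ideal.span {genF K p q, pderiv 0 (genF K p q), pderiv 1 (genF K p q)} := by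
  classical
  set F := genF K p q with hF
  set J := Ideal.span {F, pderiv 0 F, pderiv 1 F} with hJ
  let o : idxSet p q := ⟨(0, 0), zero_zero_mem_idxSet hp hpq⟩
  let x : idxSet p q := ⟨(1, 0), one_zero_mem_idxSet hp hpq⟩
  let y : idxSet p q := ⟨(0, 1), zero_one_mem_idxSet hp hpq⟩
  have hFJ : F ∈ J := Ideal.subset_span (by simp)
  have hXJ : pderiv 0 F ∈ J := Ideal.subset_span (by simp)
  have hYJ : pderiv 1 F ∈ J := Ideal.subset_span (by simp)
  let r : idxSet p q → genRing K p q := fun i =>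
    (if i = o then F - X 0 * pderiv 0 F - X 1 * pderiv 1 F else 0)
      + (if i = x then pderiv 0 F else 0) + (if i = y then pderiv 1 F else 0)
  have hr : ∀ g : idxSet p q → genRing K p q, ∑ i, r i * g i
      = (F - X 0 * pderiv 0 F - X 1 * pderiv 1 F) * g o + pderiv 0 F * g x
        + pderiv 1 F * g y := fun g => by
    simp [r, add_mul, Finset.sum_add_distrib]
  have hrJ : ∀ i, r i ∈ J := fun i => by
    refine J.add_mem (J.add_mem ?_ ?_) ?_ <;> split_ifs
    · exact J.sub_mem (J.sub_mem hFJ (J.mul_mem_left _ hXJ)) (J.mul_mem_left _ hYJ)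
    all_goals first | exact J.zero_mem | assumption
  let χ : genRing K p q →+* genRing K p q :=
    eval₂Hom (eval₂Hom (C.comp C) fun i => C (X i) - r i) X
  let ι : MvPolynomial (Fin 2) K →+* genRing K p q := map C
  have hχι : ∀ g, χ (ι g) = ι g := by
    have : χ.comp ι = ι := by
      refine MvPolynomial.ringHom_ext (fun c => ?_) fun i => ?_ <;> simp [χ, ι]
    exact DFunLike.congr_fun this
  have hχX : ∀ i, χ (C (X i)) = C (X i) - r i := fun i => by simp [χ]
  let M : idxSet p q → MvPolynomial (Fin 2) K := fun i => X 0 ^ (i : ℕ × ℕ).1 * X 1 ^ (i : ℕ × ℕ).2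
  have hFι : F = ι (X 1 ^ p - X 0 ^ q) + ∑ i, C (X i) * ι (M i) := by
    simp [hF, genF, ι, M, mul_assoc]
  have hdι : ∀ j, pderiv j F = ι (pderiv j (X 1 ^ p - X 0 ^ q))
      + ∑ i, C (X i) * ι (pderiv j (M i)) := fun j => by
    conv_lhs => rw [hFι]
    rw [map_add, map_sum, pderiv_map]
    simp only [pderiv_C_mul, ι, pderiv_map]
  have hsolve : ∀ (g : MvPolynomial (Fin 2) K) (N : idxSet p q → MvPolynomial (Fin 2) K),
      χ (ι g + ∑ i, C (X i) * ι (N i))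
      = (ι g + ∑ i, C (X i) * ι (N i)) - ∑ i, r i * ι (N i) := fun g N => by
    simp only [map_add, map_sum, map_mul, hχι, hχX, sub_mul, Finset.sum_sub_distrib]
    ring
  clear_value χ r
  refine ⟨χ, ?_, fun j => ?_, ?_⟩
  · rw [hFι, hsolve, ← hFι, hr]
    simp [M, ι, o, x, y]
    ring
  · rw [hdι, hsolve, ← hdι, hr]
    fin_cases j <;> simp [M, ι, o, x, y]
  · have hid : (Ideal.Quotient.mk J).comp χ = Ideal.Quotient.mk J := by
      refine MvPolynomial.ringHom_ext' (MvPolynomial.ringHom_ext (fun c => ?_) fun i => ?_)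
        fun i => ?_
      · have := hχι (C c)
        simp only [ι, map_C] at this
        simp [this]
      · simp only [RingHom.comp_apply, hχX, map_sub,
          Ideal.Quotient.eq_zero_iff_mem.2 (hrJ i), sub_zero]
      · have := hχι (X i)
        simp only [ι, map_X] at this
        simp [this]
    intro f
    rw [← Ideal.Quotient.eq]
    exact (DFunLike.congr_fun hid f).symm

/-- The discriminant is associated to a power of a prime element. -/
theorem exists_prime_associated_pow_genDelta [CharZero K] (hp : 1 < p) (hpq : p < q)
    (h0 : genDelta K p q ≠ 0) :
    ∃ π : coefRing K p q, Prime π ∧ ∃ k, k ≠ 0 ∧ Associated (genDelta K p q) (π ^ k) := by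
  obtain ⟨B, -⟩ := exists_basis_jacIdeal K p q hp hpq
  obtain ⟨χ, hχF, hχd, hχ⟩ := exists_incidence_retraction (K := K) hp hpq
  let P : Ideal (coefRing K p q) := RingHom.ker (χ.comp C)
  have hP : P.IsPrime := RingHom.ker_isPrime _
  have hjac : ∀ x ∈ jacIdeal K p q, χ x = 0 := fun x hx => by
    refine (Ideal.span_le (I := RingHom.ker χ)).2 ?_ hx
    rintro _ (rfl | rfl)
    exacts [hχd 0, hχd 1]
  have hmem : genDelta K p q ∈ P := by
    obtain ⟨y, hy⟩ := dvd_algebraMap_norm_of_basis B (Ideal.Quotient.mk _ (genF K p q))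
    obtain ⟨y, rfl⟩ := Ideal.Quotient.mk_surjective y
    have h1 : C (genDelta K p q) - genF K p q * y ∈ jacIdeal K p q := by
      rw [← Ideal.Quotient.eq, map_mul, ← hy, ← genDelta_eq_norm]
      rfl
    have h2 := hjac _ h1
    rwa [map_sub, map_mul, hχF, zero_mul, sub_zero] at h2
  have hdvd : ∀ f ∈ P, genDelta K p q ∣ f ^ Fintype.card (Fin (q - 1) × Fin (p - 1)) := by
    intro f hf
    have h1 := hχ (C f)
    rw [show χ (C f) = 0 from hf, sub_zero] at h1
    obtain ⟨s, z, hz, hs⟩ := Ideal.mem_span_insert.1 h1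
    rw [genDelta_eq_norm]
    refine norm_mk_dvd_pow_of_sub_mem B (s := s) ?_
    rw [hs, add_sub_cancel_left]
    exact hz
  have hprod : (UniqueFactorizationMonoid.factors (genDelta K p q)).prod ∈ P :=
    P.mem_of_dvd (UniqueFactorizationMonoid.factors_prod h0).symm.dvd hmem
  obtain ⟨π, hπ, hπP⟩ := (hP.multiset_prod_mem_iff_exists_mem _).1 hprod
  have hprime := UniqueFactorizationMonoid.prime_of_factor π hπ
  obtain ⟨k, -, hk⟩ := (dvd_prime_pow hprime _).1 (hdvd π hπP)
  refine ⟨π, hprime, k, ?_, hk⟩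
  rintro rfl
  rw [pow_zero, associated_one_iff_isUnit] at hk
  exact hP.ne_top (P.eq_top_of_isUnit_mem hmem hk)

end Incidence

section Morse

variable {K : Type} [Field K] [IsAlgClosed K] [CharZero K] {p q : ℕ}

/-- There is a pencil of curves, parametrized by the constant coefficient, with
`(p - 1) (q - 1)` singular members. -/
theorem exists_pencil_card_singular (hp : 1 < p) (hpq : p < q) {o : idxSet p q}
    (ho : (o : ℕ × ℕ) = (0, 0)) :
    ∃ (a : idxSet p q → K) (S : Finset K), S.card = (q - 1) * (p - 1) ∧
      ∀ t ∈ S, ∃ P, IsSingAt K (wPoly K p q (Function.update a o t)) P := by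
  classical
  have hq0 : (0 : ℕ) < q - 1 := by omega
  have hp0 : (0 : ℕ) < p - 1 := by omega
  have hcard : ∀ n : ℕ, 0 < n → (Polynomial.nthRootsFinset n (1 : K)).card = n := fun n hn => by
    have : NeZero (n : K) := ⟨Nat.cast_ne_zero.2 hn.ne'⟩
    obtain ⟨ζ, hζ⟩ := HasEnoughRootsOfUnity.exists_primitiveRoot K n
    exact hζ.card_nthRootsFinset
  set U := Polynomial.nthRootsFinset (q - 1) (1 : K) with hU
  set V := Polynomial.nthRootsFinset (p - 1) (1 : K) with hV
  have hqK : ((q : K) - 1) ≠ 0 := sub_ne_zero.2 (Nat.cast_ne_one.2 (by omega))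
  have hpK : ((p : K) - 1) ≠ 0 := sub_ne_zero.2 (Nat.cast_ne_one.2 (by omega))
  obtain ⟨s, hs⟩ := Infinite.exists_notMem_finset
    (((U ×ˢ U) ×ˢ (V ×ˢ V)).image fun w : (K × K) × (K × K) =>
      ((q - 1) * (w.1.1 - w.1.2)) / ((p - 1) * (w.2.1 - w.2.2) : K))
  obtain ⟨c, hc⟩ := IsAlgClosed.exists_pow_nat_eq s (show 0 < p by omega)
  let val : K × K → K := fun w => (p - 1) * s * w.2 - (q - 1) * w.1
  have hinj : Set.InjOn val (U ×ˢ V : Finset (K × K)) := by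
    rintro ⟨ξ, η⟩ h ⟨ξ', η'⟩ h' heq
    simp only [Finset.coe_product, Set.mem_prod, Finset.mem_coe] at h h'
    simp only [val] at heq
    have hη : η = η' := by
      by_contra hne
      refine hs (Finset.mem_image.2 ⟨((ξ, ξ'), (η, η')), ?_, ?_⟩)
      · simp [h.1, h.2, h'.1, h'.2]
      · rw [div_eq_iff (mul_ne_zero hpK (sub_ne_zero.2 hne))]
        linear_combination -heq
    subst hη
    have hξ : ((q : K) - 1) * (ξ - ξ') = 0 := by linear_combination -heq
    rw [sub_eq_zero.1 ((mul_eq_zero.1 hξ).resolve_left hqK)]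
  let x : idxSet p q := ⟨(1, 0), one_zero_mem_idxSet hp hpq⟩
  let y : idxSet p q := ⟨(0, 1), zero_one_mem_idxSet hp hpq⟩
  have hox : o ≠ x := fun h => by simpa [x, ho] using congrArg Subtype.val h
  have hoy : o ≠ y := fun h => by simpa [y, ho] using congrArg Subtype.val h
  let a : idxSet p q → K := fun i =>
    (if i = x then (q : K) else 0) + (if i = y then -(p * c ^ (p - 1)) else 0)
  have hW : ∀ t, wPoly K p q (Function.update a o t)
      = X 1 ^ p - X 0 ^ q + (C t + C (q : K) * X 0 + C (-(p * c ^ (p - 1))) * X 1) := fun t => by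
    have hu : ∀ i, Function.update a o t i = (if i = o then t else 0)
        + (if i = x then (q : K) else 0) + (if i = y then -(p * c ^ (p - 1)) else 0) := fun i => by
      by_cases hi : i = o
      · subst hi
        simp [hox, hoy]
      · simp [hi, a]
    rw [wPoly]
    simp only [hu, map_add, add_mul, Finset.sum_add_distrib, apply_ite C, map_zero, ite_mul,
      zero_mul, Finset.sum_ite_eq', Finset.mem_univ, if_true]
    simp [ho, x, y]
  refine ⟨a, (U ×ˢ V).image val, ?_, ?_⟩
  · rw [Finset.card_image_of_injOn hinj, Finset.card_product, hcard _ hq0, hcard _ hp0]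
  · intro t ht
    obtain ⟨⟨ξ, η⟩, hw, rfl⟩ := Finset.mem_image.1 ht
    obtain ⟨hξ, hη⟩ := Finset.mem_product.1 hw
    rw [hU, Polynomial.mem_nthRootsFinset hq0] at hξ
    rw [hV, Polynomial.mem_nthRootsFinset hp0] at hη
    simp only at hξ hη
    have hξq : ξ ^ q = ξ := by
      rw [show q = (q - 1) + 1 by omega, pow_succ, hξ, one_mul]
    have hηp : η ^ p = η := by
      conv_lhs => rw [show p = (p - 1) + 1 by omega, pow_succ, hη, one_mul]
    have hcp : c ^ (p - 1) * c = s := by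
      rw [← pow_succ, ← hc]
      congr 1
      omega
    refine ⟨(ξ, c * η), ?_, ?_, ?_⟩
    · rw [hW]
      simp [val, mul_pow, hξq, hηp, hc]
      linear_combination -(p * η) * hcp
    · rw [hW]
      simp [hξ]
    · rw [hW]
      simp [mul_pow, hη]

end Morse

/-- `Δ ∈ R` is irreducible; consequently the set of `a ∈ K^I` for which the curve `C_a`
is singular is the irreducible hypersurface defined by the irreducible equation `Δ = 0`. -/
theorem delta_irreducible
    (K : Type) [Field K] [IsAlgClosed K] [CharZero K]
    (p q : ℕ) (hp : 1 < p) (hpq : p < q) (hco : Nat.Coprime p q) :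
    Irreducible (genDelta K p q) ∧
    {a : idxSet p q → K | ∃ P : K × K, IsSingAt K (wPoly K p q a) P} =
      {a : idxSet p q → K | eval a (genDelta K p q) = 0} := by
  classical
  refine ⟨?_, Set.ext fun a => ⟨fun ⟨P, hP⟩ => eval_genDelta_eq_zero_of_isSingAt hp hpq hP,
    exists_isSingAt_of_eval_genDelta_eq_zero hp hpq⟩⟩
  let o : idxSet p q := ⟨(0, 0), zero_zero_mem_idxSet hp hpq⟩
  obtain ⟨a, S, hS, hsing⟩ := exists_pencil_card_singular (K := K) hp hpq (o := o) rfl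
  obtain ⟨hmonic, hdeg⟩ := specialize_genDelta hp hpq (o := o) rfl a
  have h0 : genDelta K p q ≠ 0 := fun h => hmonic.ne_zero (by rw [h, map_zero])
  obtain ⟨π, hπ, k, hk0, u, hu⟩ := exists_prime_associated_pow_genDelta hp hpq h0
  have hspec : specialize o a (genDelta K p q) * specialize o a u = specialize o a π ^ k := by
    rw [← map_mul, hu, map_pow]
  have hune : specialize o a u ≠ 0 := (u.isUnit.map (specialize o a)).ne_zero
  have hudeg : (specialize o a u).natDegree = 0 :=
    Polynomial.natDegree_eq_zero_of_isUnit (u.isUnit.map (specialize o a))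
  have hπne : specialize o a π ≠ 0 := fun h => by
    rw [h, zero_pow hk0] at hspec
    exact (mul_ne_zero hmonic.ne_zero hune) hspec
  have hroots : S ⊆ (specialize o a π).roots.toFinset := fun t ht => by
    obtain ⟨P, hP⟩ := hsing t ht
    have h1 := congrArg (Polynomial.eval t) hspec
    rw [Polynomial.eval_mul, eval_specialize o a t (genDelta K p q),
      eval_genDelta_eq_zero_of_isSingAt hp hpq hP, zero_mul, Polynomial.eval_pow] at h1
    rw [Multiset.mem_toFinset, Polynomial.mem_roots hπne]
    exact (pow_eq_zero_iff hk0).1 h1.symm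
  have hle : (q - 1) * (p - 1) ≤ (specialize o a π).natDegree := by
    rw [← hS]
    exact (Finset.card_le_card hroots).trans
      ((Multiset.toFinset_card_le _).trans (Polynomial.card_roots' _))
  have hdegk := congrArg Polynomial.natDegree hspec
  rw [Polynomial.natDegree_mul hmonic.ne_zero hune, hudeg, add_zero,
    Polynomial.natDegree_pow] at hdegk
  have hpos : 0 < (q - 1) * (p - 1) := Nat.mul_pos (by omega) (by omega)
  have hk1 : k = 1 := by
    by_contra hk
    have hk2 : 2 ≤ k := by omega
    nlinarith
  rw [hk1, pow_one] at hu
  exact (show Associated (genDelta K p q) π from ⟨u, hu⟩).irreducible_iff.2 hπ.irreducible
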